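/- There exists an absolute constant C > 0 such that for every real Banach space X, every compact set K ⊂ X, every γ ∈ (0,1], and every sequence produced by the weak greedy algorithm with parameter γ, the error satisfies σ_n(K) ≤ C γ^{−1} n · ε_n(co(K)) for all n ≥ 1. -/

import Mathlib

open scoped RealInnerProductSpace

/-- Dyadic entropy number: infimum of all `ε > 0` such that `K` is covered by `2^n`
balls of radius `ε`. -/
noncomputable def entropyNumber {X : Type*} [NormedAddCommGroup X] (n : ℕ) (K : Set X) : ℝ :=
  sInf {ε : ℝ | 0 < ε ∧ ∃ c : Fin (2 ^ n) → X, K ⊆ ⋃ i, Metric.closedBall (c i) ε}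

/-- Symmetric (absolutely) convex hull: closure of the set of finite sums `∑ cᵢ gᵢ`
with `gᵢ ∈ K` and `∑ |cᵢ| ≤ 1`. -/
noncomputable def symConvexHull {X : Type*} [NormedAddCommGroup X] [NormedSpace ℝ X]
    (K : Set X) : Set X :=
  closure {x : X | ∃ (m : ℕ) (c : Fin m → ℝ) (g : Fin m → X),
    (∀ i, g i ∈ K) ∧ (∑ i, |c i|) ≤ 1 ∧ x = ∑ i, c i • g i}

/-- Volume of the unit Euclidean ball in `ℝⁿ`. -/
noncomputable def unitBallVol (n : ℕ) : ℝ :=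
  Real.pi ^ ((n : ℝ) / 2) / Real.Gamma ((n : ℝ) / 2 + 1)

/-- Span of the first `n` terms of a sequence. -/
noncomputable def spanFirst {X : Type*} [NormedAddCommGroup X] [NormedSpace ℝ X]
    (f : ℕ → X) (n : ℕ) : Submodule ℝ X :=
  Submodule.span ℝ (f '' {i | i < n})

/-- The weak greedy algorithm with parameter `γ`: `f n` (the `(n+1)`-st iterate) lies in `K`
and its distance to the span of the previous iterates is at least `γ` times that of any
other element of `K`. -/
def IsWeakGreedy {X : Type*} [NormedAddCommGroup X] [NormedSpace ℝ X]
    (γ : ℝ) (K : Set X) (f : ℕ → X) : Prop :=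
  ∀ n : ℕ, f n ∈ K ∧ ∀ g ∈ K,
    γ * Metric.infDist g (spanFirst f n : Set X) ≤ Metric.infDist (f n) (spanFirst f n : Set X)

/-- The greedy error `σ_n(K) = sup_{f ∈ K} dist(f, span{f_1,…,f_n})`. -/
noncomputable def greedyError {X : Type*} [NormedAddCommGroup X] [NormedSpace ℝ X]
    (K : Set X) (f : ℕ → X) (n : ℕ) : ℝ :=
  sSup ((fun g => Metric.infDist g (spanFirst f n : Set X)) '' K)

/-- Kolmogorov `n`-width. -/
noncomputable def kolmogorovWidth {X : Type*} [NormedAddCommGroup X] [NormedSpace ℝ X]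
    (n : ℕ) (K : Set X) : ℝ :=
  sInf {d : ℝ | ∃ Y : Submodule ℝ X, FiniteDimensional ℝ Y ∧ Module.finrank ℝ Y ≤ n ∧
    d = sSup ((fun g => Metric.infDist g (Y : Set X)) '' K)}

/-- `f` admits an `ℓ¹` representation over the dictionary `D`. -/
def HasL1Rep {X : Type*} [NormedAddCommGroup X] [NormedSpace ℝ X] (D : Set X) (f : X) : Prop :=
  ∃ (c : ℕ → ℝ) (g : ℕ → X), (∀ i, g i ∈ D) ∧ Summable (fun i => |c i|) ∧
    HasSum (fun i => c i • g i) f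

/-- The variation norm `‖f‖_{L₁(D)}`. -/
noncomputable def varNorm {X : Type*} [NormedAddCommGroup X] [NormedSpace ℝ X]
    (D : Set X) (f : X) : ℝ :=
  sInf {t : ℝ | ∃ (c : ℕ → ℝ) (g : ℕ → X), (∀ i, g i ∈ D) ∧ Summable (fun i => |c i|) ∧
    HasSum (fun i => c i • g i) f ∧ t = ∑' i, |c i|}

/-- The orthogonal greedy algorithm with target `f`: `fa 0 = 0`; at each step `g n ∈ D`
maximizes `|⟨g, f - fa n⟩|` over `D`, and `fa (n+1)` is the orthogonal projection of `f`
onto `span{g 0, …, g n}`. -/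
def IsOGA {X : Type*} [NormedAddCommGroup X] [InnerProductSpace ℝ X]
    (D : Set X) (f : X) (g fa : ℕ → X) : Prop :=
  fa 0 = 0 ∧ ∀ n : ℕ,
    g n ∈ D ∧ (∀ h ∈ D, |⟪h, f - fa n⟫| ≤ |⟪g n, f - fa n⟫|) ∧
    fa (n + 1) ∈ Submodule.span ℝ (g '' {i | i ≤ n}) ∧
    ∀ w ∈ Submodule.span ℝ (g '' {i | i ≤ n}), ⟪f - fa (n + 1), w⟫ = 0

/-- Best `n`-term approximation error `E_n(f, D)`. -/
noncomputable def bestNTermError {X : Type*} [NormedAddCommGroup X] [NormedSpace ℝ X]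
    (D : Set X) (n : ℕ) (f : X) : ℝ :=
  sInf {r : ℝ | ∃ (c : Fin n → ℝ) (g : Fin n → X), (∀ i, g i ∈ D) ∧ r = ‖f - ∑ i, c i • g i‖}

/-- The K-functional `K(t, g)` between `X` and `L₁(D)`. -/
noncomputable def Kfunctional {X : Type*} [NormedAddCommGroup X] [NormedSpace ℝ X]
    (D : Set X) (t : ℝ) (gg : X) : ℝ :=
  sInf {s : ℝ | ∃ h : X, HasL1Rep D h ∧ s = ‖gg - h‖ + t * varNorm D h}

/-- The interpolation norm `‖g‖_θ = sup_{t > 0} t^{-θ} K(t, g)`. -/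
noncomputable def interpNorm {X : Type*} [NormedAddCommGroup X] [NormedSpace ℝ X]
    (D : Set X) (θ : ℝ) (gg : X) : ℝ :=
  sSup ((fun t => t ^ (-θ) * Kfunctional D t gg) '' Set.Ioi (0 : ℝ))

/-!
Vectors `x₁, …, xₙ` whose distances to the spans of their predecessors are `d₁, …, dₙ` admit, by
Hahn–Banach, functionals `ℓ₁, …, ℓₙ` of norm at most `1` for which the matrix `(ℓᵢ xⱼ)` is
triangular with diagonal `d₁, …, dₙ`. Hence `a ↦ (ℓᵢ (∑ⱼ aⱼ xⱼ))ᵢ` multiplies volumes by `∏ᵢ dᵢ`,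
while each `ε`-ball of `X` that helps to cover the convex hull is sent into a cube of side `2ε`.
Comparing with the volume `2ⁿ / n!` of the unit ball of `ℓ₁ⁿ` shows that covering the symmetric
convex hull of the `xᵢ` by `N` balls of radius `ε` forces `∏ᵢ dᵢ ≤ N n! εⁿ`. For the weak greedy
algorithm all `dᵢ` are at least `γ σₙ`, and with `N = 2ⁿ` the estimate `n! ≤ nⁿ` gives
`γ σₙ ≤ 2 n ε`.
-/

open MeasureTheory Metric
open scoped Nat

section Duality

variable {𝕜 X : Type*} [RCLike 𝕜] [SeminormedAddCommGroup X] [NormedSpace 𝕜 X]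

theorem exists_norm_le_one_vanishing_eq_infDist (Y : Submodule 𝕜 X) (x : X) :
    ∃ ℓ : StrongDual 𝕜 X, ‖ℓ‖ ≤ 1 ∧ (∀ y ∈ Y, ℓ y = 0) ∧ ℓ x = (infDist x (Y : Set X) : 𝕜) := by
  obtain ⟨g, hg, hgx⟩ := exists_dual_vector'' 𝕜 (Y.mkQL x)
  refine ⟨g.comp Y.mkQL, ContinuousLinearMap.opNorm_le_bound _ zero_le_one fun z => ?_,
    fun y hy => ?_, ?_⟩
  · exact g.le_of_opNorm_le_of_le hg (Submodule.Quotient.norm_mk_le Y z)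
  · have hmk : Y.mkQL y = 0 := (Submodule.Quotient.mk_eq_zero Y).2 hy
    rw [ContinuousLinearMap.comp_apply, hmk, map_zero]
  · exact hgx.trans (congrArg _ (QuotientAddGroup.norm_mk (S := Y.toAddSubgroup) x))

theorem exists_norm_le_one_det_comp_linearCombination_eq_prod_infDist {ι : Type*} [Fintype ι]
    [LinearOrder ι] (x : ι → X) (Y : ι → Submodule 𝕜 X) (hxY : ∀ i, ∀ j < i, x j ∈ Y i) :
    ∃ L : X →L[𝕜] ι → 𝕜, ‖L‖ ≤ 1 ∧
      LinearMap.det ((L : X →ₗ[𝕜] ι → 𝕜) ∘ₗ Fintype.linearCombination 𝕜 x) =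
        ((∏ i, infDist (x i) (Y i : Set X) : ℝ) : 𝕜) := by
  choose ℓ hℓ hℓ_zero hℓ_self using fun i => exists_norm_le_one_vanishing_eq_infDist (Y i) (x i)
  refine ⟨ContinuousLinearMap.pi ℓ, ContinuousLinearMap.norm_pi_le_of_le hℓ zero_le_one, ?_⟩
  set T := (ContinuousLinearMap.pi ℓ : X →ₗ[𝕜] ι → 𝕜) ∘ₗ Fintype.linearCombination 𝕜 x
  have hT : ∀ i j, T.toMatrix' i j = ℓ i (x j) := fun i j => by
    simp [T, LinearMap.toMatrix'_apply]
  have hT_triangular : T.toMatrix'.IsUpperTriangular := fun i j hij =>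
    (hT i j).trans (hℓ_zero i _ (hxY i j hij))
  rw [← LinearMap.det_toMatrix', Matrix.det_of_isUpperTriangular hT_triangular]
  simp only [hT, hℓ_self, RCLike.ofReal_prod]

end Duality

section Volume

theorem ofReal_abs_det_mul_measure_le_of_image_subset_iUnion_closedBall {E κ : Type*}
    [NormedAddCommGroup E] [NormedSpace ℝ E] [FiniteDimensional ℝ E] [MeasurableSpace E]
    [BorelSpace E] (μ : Measure E) [μ.IsAddHaarMeasure] [Fintype κ] (T : E →ₗ[ℝ] E) {s : Set E}
    {c : κ → E} {ε : ℝ} (h : T '' s ⊆ ⋃ k, closedBall (c k) ε) :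
    ENNReal.ofReal |LinearMap.det T| * μ s ≤ Fintype.card κ * μ (closedBall 0 ε) :=
  calc ENNReal.ofReal |LinearMap.det T| * μ s
      = μ (T '' s) := (Measure.addHaar_image_linearMap μ T s).symm
    _ ≤ ∑ k, μ (closedBall (c k) ε) := (measure_mono h).trans (measure_iUnion_fintype_le _ _)
    _ = Fintype.card κ * μ (closedBall 0 ε) := by
      simp only [Measure.addHaar_closedBall_center, Finset.sum_const, Finset.card_univ,
        nsmul_eq_mul]

theorem volume_sum_abs_lt_one (ι : Type*) [Fintype ι] :
    volume {a : ι → ℝ | ∑ i, |a i| < 1} =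
      ENNReal.ofReal (2 ^ Fintype.card ι / (Fintype.card ι)!) := by
  simpa [one_add_one_eq_two, Real.Gamma_two, Real.Gamma_nat_eq_factorial] using
    volume_sum_rpow_lt_one ι (p := 1) le_rfl

end Volume

section SymConvexHull

variable {X : Type*} [NormedAddCommGroup X] [NormedSpace ℝ X] {K : Set X}

theorem sum_smul_mem_symConvexHull {ι : Type*} [Fintype ι] {x : ι → X} (hx : ∀ i, x i ∈ K)
    {a : ι → ℝ} (ha : ∑ i, |a i| ≤ 1) : ∑ i, a i • x i ∈ symConvexHull K := by
  let e := (Fintype.equivFin ι).symm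
  exact subset_closure ⟨Fintype.card ι, a ∘ e, x ∘ e, fun i => hx (e i),
    (e.sum_comp fun i => |a i|).trans_le ha, (e.sum_comp fun i => a i • x i).symm⟩

theorem isBounded_symConvexHull (hK : Bornology.IsBounded K) :
    Bornology.IsBounded (symConvexHull K) := by
  obtain ⟨R, hR, hKR⟩ := hK.subset_closedBall_lt 0 0
  refine (isBounded_closedBall (x := 0) (r := R)).subset
    (closure_minimal ?_ isClosed_closedBall)
  rintro _ ⟨m, c, g, hg, hc, rfl⟩
  rw [mem_closedBall_zero_iff]
  calc ‖∑ i, c i • g i‖ ≤ ∑ i, |c i| * R := norm_sum_le_of_le _ fun i _ => by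
        rw [norm_smul, Real.norm_eq_abs]
        gcongr
        exact mem_closedBall_zero_iff.1 (hKR (hg i))
    _ = (∑ i, |c i|) * R := (Finset.sum_mul ..).symm
    _ ≤ R := mul_le_of_le_one_left hR.le hc

end SymConvexHull

section Covering

variable {X ι κ : Type*} [Fintype ι] [LinearOrder ι] [Fintype κ]

theorem ofReal_prod_infDist_mul_volume_le_of_image_subset_iUnion_closedBall
    [SeminormedAddCommGroup X] [NormedSpace ℝ X] {x : ι → X} {Y : ι → Submodule ℝ X}
    (hxY : ∀ i, ∀ j < i, x j ∈ Y i) {s : Set (ι → ℝ)} {c : κ → X} {ε : ℝ}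
    (h : Fintype.linearCombination ℝ x '' s ⊆ ⋃ k, closedBall (c k) ε) :
    ENNReal.ofReal (∏ i, infDist (x i) (Y i : Set X)) * volume s ≤
      Fintype.card κ * volume (closedBall (0 : ι → ℝ) ε) := by
  obtain ⟨L, hL, hdet⟩ :=
    exists_norm_le_one_det_comp_linearCombination_eq_prod_infDist x Y hxY
  have hcover : ((L : X →ₗ[ℝ] ι → ℝ) ∘ₗ Fintype.linearCombination ℝ x) '' s ⊆
      ⋃ k, closedBall (L (c k)) ε := by
    rintro _ ⟨a, ha, rfl⟩
    obtain ⟨k, hk⟩ := Set.mem_iUnion.1 (h ⟨a, ha, rfl⟩)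
    refine Set.mem_iUnion.2 ⟨k, ?_⟩
    rw [mem_closedBall, dist_eq_norm] at hk ⊢
    simpa using L.le_of_opNorm_le_of_le hL hk
  refine le_trans ?_ (ofReal_abs_det_mul_measure_le_of_image_subset_iUnion_closedBall volume _
    hcover)
  gcongr
  rw [hdet]
  exact le_abs_self _

variable [NormedAddCommGroup X] [NormedSpace ℝ X]

theorem prod_infDist_le_of_symConvexHull_subset_iUnion_closedBall {K : Set X} {x : ι → X}
    (hxK : ∀ i, x i ∈ K) {Y : ι → Submodule ℝ X} (hxY : ∀ i, ∀ j < i, x j ∈ Y i) {c : κ → X}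
    {ε : ℝ} (hε : 0 ≤ ε) (h : symConvexHull K ⊆ ⋃ k, closedBall (c k) ε) :
    ∏ i, infDist (x i) (Y i : Set X) ≤
      Fintype.card κ * (Fintype.card ι)! * ε ^ Fintype.card ι := by
  have hcover : Fintype.linearCombination ℝ x '' {a | ∑ i, |a i| < 1} ⊆
      ⋃ k, closedBall (c k) ε := by
    rintro _ ⟨a, ha, rfl⟩
    exact h (sum_smul_mem_symConvexHull hxK (le_of_lt ha))
  have hvol := ofReal_prod_infDist_mul_volume_le_of_image_subset_iUnion_closedBall hxY hcover
  have hprod : 0 ≤ ∏ i, infDist (x i) (Y i : Set X) :=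
    Finset.prod_nonneg fun _ _ => infDist_nonneg
  rw [volume_sum_abs_lt_one, Real.volume_pi_closedBall _ hε, ← ENNReal.ofReal_natCast,
    ← ENNReal.ofReal_mul hprod, ← ENNReal.ofReal_mul (Nat.cast_nonneg _),
    ENNReal.ofReal_le_ofReal_iff (by positivity), mul_div_assoc', div_le_iff₀ (by positivity),
    mul_pow] at hvol
  refine le_of_mul_le_mul_right (hvol.trans_eq ?_) (pow_pos two_pos (Fintype.card ι))
  ring

end Covering

theorem le_entropyNumber {X : Type*} [NormedAddCommGroup X] {K : Set X}
    (hK : Bornology.IsBounded K) {n : ℕ} {b : ℝ}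
    (h : ∀ ε > 0, ∀ c : Fin (2 ^ n) → X, K ⊆ ⋃ i, closedBall (c i) ε → b ≤ ε) :
    b ≤ entropyNumber n K := by
  obtain ⟨R, hR, hKR⟩ := hK.subset_closedBall_lt 0 0
  refine le_csInf ⟨R, hR, fun _ => 0, fun x hx => ?_⟩ fun ε ⟨hε, c, hc⟩ => h ε hε c hc
  exact Set.mem_iUnion.2 ⟨0, hKR hx⟩

section WeakGreedy

variable {X : Type*} [NormedAddCommGroup X] [NormedSpace ℝ X]

theorem spanFirst_mono (f : ℕ → X) : Monotone (spanFirst f) := fun _ _ h =>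
  Submodule.span_mono (Set.image_mono fun _ hi => lt_of_lt_of_le hi h)

theorem mem_spanFirst (f : ℕ → X) {i n : ℕ} (h : i < n) : f i ∈ spanFirst f n :=
  Submodule.subset_span ⟨i, h, rfl⟩

theorem greedyError_nonneg (K : Set X) (f : ℕ → X) (n : ℕ) : 0 ≤ greedyError K f n :=
  Real.sSup_nonneg <| by
    rintro _ ⟨g, -, rfl⟩
    exact infDist_nonneg

variable {K : Set X} {γ : ℝ} {f : ℕ → X}

theorem IsWeakGreedy.mul_greedyError_le_infDist (hf : IsWeakGreedy γ K f) (hγ : 0 < γ) {k n : ℕ}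
    (hkn : k ≤ n) : γ * greedyError K f n ≤ infDist (f k) (spanFirst f k : Set X) := by
  rw [← le_div_iff₀' hγ]
  refine csSup_le ⟨_, f 0, (hf 0).1, rfl⟩ ?_
  rintro _ ⟨g, hg, rfl⟩
  rw [le_div_iff₀' hγ]
  calc γ * infDist g (spanFirst f n : Set X) ≤ γ * infDist g (spanFirst f k : Set X) := by
        gcongr
        exact infDist_le_infDist_of_subset (spanFirst_mono f hkn) ⟨0, zero_mem _⟩
    _ ≤ infDist (f k) (spanFirst f k : Set X) := (hf k).2 g hg

theorem IsWeakGreedy.mul_greedyError_pow_le (hf : IsWeakGreedy γ K f) (hγ : 0 < γ) (n : ℕ)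
    {κ : Type*} [Fintype κ] {c : κ → X} {ε : ℝ} (hε : 0 ≤ ε)
    (h : symConvexHull K ⊆ ⋃ k, closedBall (c k) ε) :
    (γ * greedyError K f n) ^ n ≤ Fintype.card κ * n ! * ε ^ n :=
  calc (γ * greedyError K f n) ^ n = ∏ _i : Fin n, γ * greedyError K f n := by
        rw [Fin.prod_const]
    _ ≤ ∏ i : Fin n, infDist (f i) (spanFirst f i : Set X) :=
      Finset.prod_le_prod (fun _ _ => mul_nonneg hγ.le (greedyError_nonneg K f n))
        fun i _ => hf.mul_greedyError_le_infDist hγ i.is_lt.le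
    _ ≤ Fintype.card κ * n ! * ε ^ n := by
      simpa only [Fintype.card_fin] using
        prod_infDist_le_of_symConvexHull_subset_iUnion_closedBall (x := fun i : Fin n => f i)
          (fun i => (hf i).1) (fun _ _ hji => mem_spanFirst f hji) hε h

theorem IsWeakGreedy.mul_greedyError_le (hf : IsWeakGreedy γ K f) (hγ : 0 < γ) {n : ℕ}
    (hn : n ≠ 0) {c : Fin (2 ^ n) → X} {ε : ℝ} (hε : 0 ≤ ε)
    (h : symConvexHull K ⊆ ⋃ k, closedBall (c k) ε) : γ * greedyError K f n ≤ 2 * n * ε := by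
  refine le_of_pow_le_pow_left₀ hn (by positivity) ?_
  calc (γ * greedyError K f n) ^ n ≤ 2 ^ n * n ! * ε ^ n := by
        simpa using hf.mul_greedyError_pow_le hγ n hε h
    _ ≤ 2 ^ n * (n : ℝ) ^ n * ε ^ n := by
      gcongr
      exact_mod_cast n.factorial_le_pow
    _ = (2 * n * ε) ^ n := by rw [mul_pow, mul_pow]

theorem weakGreedy_error_le_linear_entropy_banach_general (hK : Bornology.IsBounded K)
    (hγ : 0 < γ) (hf : IsWeakGreedy γ K f) {n : ℕ} (hn : 1 ≤ n) :
    greedyError K f n ≤ 2 * γ⁻¹ * n * entropyNumber n (symConvexHull K) := by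
  have hentropy : γ * greedyError K f n / (2 * n) ≤ entropyNumber n (symConvexHull K) :=
    le_entropyNumber (isBounded_symConvexHull hK) fun ε hε c hc => by
      rw [div_le_iff₀' (by positivity)]
      exact hf.mul_greedyError_le hγ (by lia) hε.le hc
  calc greedyError K f n = 2 * γ⁻¹ * n * (γ * greedyError K f n / (2 * n)) := by field_simp
    _ ≤ 2 * γ⁻¹ * n * entropyNumber n (symConvexHull K) := by gcongr

end WeakGreedy

/-- there is an absolute constant `C` with
`σ_n(K) ≤ C γ⁻¹ n ε_n(co(K))` for the weak greedy algorithm in any Banach space. -/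
theorem weakGreedy_error_le_linear_entropy_banach :
    ∃ C : ℝ, 0 < C ∧
      ∀ (X : Type) (_ : NormedAddCommGroup X) (_ : NormedSpace ℝ X) (_ : CompleteSpace X)
        (K : Set X), IsCompact K →
        ∀ γ : ℝ, γ ∈ Set.Ioc (0 : ℝ) 1 →
        ∀ f : ℕ → X, IsWeakGreedy γ K f →
        ∀ n : ℕ, 1 ≤ n →
          greedyError K f n
            ≤ C * γ⁻¹ * (n : ℝ) * entropyNumber n (symConvexHull K) :=
  ⟨2, two_pos, fun _ _ _ _ _ hK _ hγ _ hf _ hn =>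
    weakGreedy_error_le_linear_entropy_banach_general hK.isBounded hγ.1 hf hn⟩
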